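/- arXiv:2111.13245 — 3 statements merged into one kernel-verified Lean document; each statement's English description precedes it below -/
import Mathlib

section
/- Let ψ : ℝ → ℝ be measurable, 2π-periodic, and integrable on [0,2π]. Then the function Ψ(t,x) := ∫₀^{2π} Φ(t, x−y)·ψ(y) dy is infinitely differentiable on (0,∞) × ℝ, is 2π-periodic in x, and satisfies the heat equation ∂ₜΨ(t,x) = ∂ₓₓΨ(t,x) pointwise on (0,∞) × ℝ; moreover all partial derivatives may be computed by differentiating under the integral: ∂ₜ^{(m)}∂ₓ^{(n)}Ψ(t,x) = ∫₀^{2π} ∂ₜ^{(m)}∂ₓ^{(n)}Φ(t, x−y)·ψ(y) dy. -/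
open MeasureTheory Real Filter

/-- The one-dimensional periodic heat kernel
`Φ(t,x) = 1/(2π) + (1/π)·∑_{n=1}^∞ exp(−n²t)·cos(nx)`. -/
noncomputable def Φ (t x : ℝ) : ℝ :=
  1 / (2 * π) + (1 / π) * ∑' n : ℕ, Real.exp (-((n : ℝ) + 1) ^ 2 * t) * Real.cos (((n : ℝ) + 1) * x)

/-- `Ψ(t,x) = ∫₀^{2π} Φ(t,x−y)·ψ(y) dy`. -/
noncomputable def Ψ (ψ : ℝ → ℝ) (t x : ℝ) : ℝ :=
  ∫ y in (0 : ℝ)..(2 * π), Φ t (x - y) * ψ y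

/-! Write `eₙ(t, x) = exp (-n²t + inx)`. A series `∑ cₙ eₙ` over `ℤ` that converges absolutely for
all `t > 0` may be differentiated term by term, and each derivative acts on the coefficients as a
Fourier multiplier: `∂ₓ` is multiplication by `in` and `∂ₜ` by `(in)²`. The Gaussian decay absorbs
these multipliers, so the class of such series is stable under differentiation and consists of
smooth solutions of the heat equation. The kernel is the series with `cₙ = 1/(2π)`. Integrating
`F(t, x - y)` against `ψ(y)` multiplies the coefficients of `F` by those of `ψ`, and coefficientwise
multiplications commute: this is differentiation under the integral sign. -/

section LinearOfPartials

variable {E : Type*} [NormedAddCommGroup E] [NormedSpace ℝ E]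

/-- The linear map `(u, v) ↦ u • a + v • b`, the total derivative of a function of two real
variables with partial derivatives `a` and `b`. -/
noncomputable def linearOfPartials (a b : E) : ℝ × ℝ →L[ℝ] E :=
  (ContinuousLinearMap.fst ℝ ℝ ℝ).smulRight a + (ContinuousLinearMap.snd ℝ ℝ ℝ).smulRight b

lemma norm_linearOfPartials_le (a b : E) : ‖linearOfPartials a b‖ ≤ ‖a‖ + ‖b‖ := by
  refine (norm_add_le _ _).trans (add_le_add ?_ ?_)
  · rw [ContinuousLinearMap.norm_smulRight_apply]
    exact mul_le_of_le_one_left (norm_nonneg a) (ContinuousLinearMap.norm_fst_le ℝ ℝ ℝ)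
  · rw [ContinuousLinearMap.norm_smulRight_apply]
    exact mul_le_of_le_one_left (norm_nonneg b) (ContinuousLinearMap.norm_snd_le ℝ ℝ ℝ)

lemma hasSum_linearOfPartials {ι : Type*} {f g : ι → E} {a b : E} (hf : HasSum f a)
    (hg : HasSum g b) :
    HasSum (fun i => linearOfPartials (f i) (g i)) (linearOfPartials a b) :=
  ((ContinuousLinearMap.smulRightL ℝ (ℝ × ℝ) E (.fst ℝ ℝ ℝ)).hasSum hf).add
    ((ContinuousLinearMap.smulRightL ℝ (ℝ × ℝ) E (.snd ℝ ℝ ℝ)).hasSum hg)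

end LinearOfPartials

/-- Coefficients `c` for which `∑ₙ cₙ exp (-n²t + inx)` converges absolutely at all times `t > 0`.
The norm of the `n`-th term does not depend on `x`. -/
def HeatSummable (c : ℤ → ℂ) : Prop :=
  ∀ t : ℝ, 0 < t → Summable fun n : ℤ => ‖c n‖ * Real.exp (-(n : ℝ) ^ 2 * t)

/-- The exponential mode `exp (-n²t + inx)`, a complex solution of the heat equation. -/
noncomputable def heatMode (n : ℤ) (t x : ℝ) : ℂ :=
  Complex.exp (-(n : ℂ) ^ 2 * t + Complex.I * n * x)

/-- The series of heat modes with coefficients `c`, which is the solution of the heat equation with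
initial Fourier coefficients `c`; it is only meaningful for `t > 0` and `HeatSummable c`. -/
noncomputable def heatSeries (c : ℤ → ℂ) (t x : ℝ) : ℂ :=
  ∑' n : ℤ, c n * heatMode n t x

/-- The Fourier symbol of `∂ₓ`. As an element of the ring `ℤ → ℂ` it acts on coefficient sequences
by pointwise multiplication, and its square is the symbol of `∂ₜ` on heat modes. -/
noncomputable def derivSymbol (n : ℤ) : ℂ := Complex.I * n

lemma norm_heatMode (n : ℤ) (t x : ℝ) : ‖heatMode n t x‖ = Real.exp (-(n : ℝ) ^ 2 * t) := by
  have h : -(n : ℂ) ^ 2 * t + Complex.I * n * x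
      = ((-(n : ℝ) ^ 2 * t : ℝ) : ℂ) + ((n * x : ℝ) : ℂ) * Complex.I := by
    push_cast; ring
  rw [heatMode, h, Complex.exp_add, norm_mul, Complex.norm_exp_ofReal_mul_I, mul_one,
    ← Complex.ofReal_exp, Complex.norm_real, Real.norm_of_nonneg (Real.exp_nonneg _)]

lemma heatMode_add (n : ℤ) (s t x y : ℝ) :
    heatMode n (s + t) (x + y) = heatMode n s x * heatMode n t y := by
  simp only [heatMode, ← Complex.exp_add]
  push_cast
  ring_nf

lemma heatMode_zero_two_pi (n : ℤ) : heatMode n 0 (2 * π) = 1 := by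
  rw [heatMode, ← Complex.exp_int_mul_two_pi_mul_I n]
  push_cast
  ring_nf

lemma heatMode_add_two_pi (n : ℤ) (t x : ℝ) : heatMode n t (x + 2 * π) = heatMode n t x := by
  simpa [heatMode_zero_two_pi] using heatMode_add n t 0 x (2 * π)

lemma heatMode_add_heatMode_neg (n : ℤ) (t x : ℝ) :
    heatMode n t x + heatMode (-n) t x
      = ((2 * (Real.exp (-(n : ℝ) ^ 2 * t) * Real.cos (n * x)) : ℝ) : ℂ) := by
  push_cast
  rw [mul_left_comm, Complex.two_cos, mul_add]
  simp only [heatMode, ← Complex.exp_add]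
  push_cast
  ring_nf

lemma hasFDerivAt_heatMode (n : ℤ) (p : ℝ × ℝ) :
    HasFDerivAt (fun p : ℝ × ℝ => heatMode n p.1 p.2)
      (linearOfPartials (derivSymbol n ^ 2 * heatMode n p.1 p.2)
        (derivSymbol n * heatMode n p.1 p.2)) p := by
  have hfst : HasFDerivAt (fun p : ℝ × ℝ => (p.1 : ℂ))
      (Complex.ofRealCLM ∘L .fst ℝ ℝ ℝ) p :=
    (Complex.ofRealCLM ∘L .fst ℝ ℝ ℝ).hasFDerivAt
  have hsnd : HasFDerivAt (fun p : ℝ × ℝ => (p.2 : ℂ))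
      (Complex.ofRealCLM ∘L .snd ℝ ℝ ℝ) p :=
    (Complex.ofRealCLM ∘L .snd ℝ ℝ ℝ).hasFDerivAt
  have hsymbol : derivSymbol n ^ 2 = -(n : ℂ) ^ 2 := by
    rw [derivSymbol, mul_pow, Complex.I_sq, neg_one_mul]
  refine ((hfst.const_mul (-(n : ℂ) ^ 2)).add
    (hsnd.const_mul (Complex.I * n))).cexp.congr_fderiv ?_
  rw [hsymbol]
  ext <;> simp [linearOfPartials, heatMode, derivSymbol, mul_comm]

namespace HeatSummable

variable {c d : ℤ → ℂ}

lemma of_norm_le {C : ℝ} (h : ∀ n, ‖c n‖ ≤ C) : HeatSummable c := by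
  intro t ht
  have hgauss : Summable fun n : ℤ => Real.exp (-(n : ℝ) ^ 2 * t) := by
    refine (summable_pow_mul_jacobiTheta₂_term_bound 0 (div_pos ht pi_pos) 0).congr fun n => ?_
    rw [pow_zero, one_mul]
    congr 1
    field_simp
    ring
  exact .of_nonneg_of_le (fun n => by positivity) (fun n => by gcongr; exact h n)
    (hgauss.mul_left C)

lemma mul_of_norm_le (hc : HeatSummable c) {C : ℝ} (h : ∀ n, ‖d n‖ ≤ C) :
    HeatSummable (c * d) := by
  intro t ht
  refine .of_nonneg_of_le (fun n => by positivity) (fun n => ?_) ((hc t ht).mul_left C)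
  rw [Pi.mul_apply, norm_mul, mul_comm ‖c n‖, mul_assoc]
  gcongr
  exact h n

-- Half of the Gaussian absorbs the frequency, since `|n| ≤ n²` and `u ≤ exp u` at `u = n²t/2`.
lemma derivSymbol_mul (hc : HeatSummable c) : HeatSummable (derivSymbol * c) := by
  intro t ht
  refine .of_nonneg_of_le (fun n => by positivity) (fun n => ?_)
    ((hc (t / 2) (by positivity)).mul_left (2 / t))
  have hfreq : |(n : ℝ)| ≤ 2 / t * Real.exp ((n : ℝ) ^ 2 * (t / 2)) :=
    calc |(n : ℝ)| ≤ (n : ℝ) ^ 2 := by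
          rw [← sq_abs, ← Int.cast_abs]
          exact_mod_cast Int.le_self_sq |n|
      _ = 2 / t * ((n : ℝ) ^ 2 * (t / 2)) := by field_simp
      _ ≤ 2 / t * Real.exp ((n : ℝ) ^ 2 * (t / 2)) := by
          gcongr
          linarith [Real.add_one_le_exp ((n : ℝ) ^ 2 * (t / 2))]
  have hnorm : ‖(derivSymbol * c) n‖ = |(n : ℝ)| * ‖c n‖ := by simp [derivSymbol]
  have hexp : Real.exp ((n : ℝ) ^ 2 * (t / 2)) * Real.exp (-(n : ℝ) ^ 2 * t)
      = Real.exp (-(n : ℝ) ^ 2 * (t / 2)) := by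
    rw [← Real.exp_add]; ring_nf
  calc ‖(derivSymbol * c) n‖ * Real.exp (-(n : ℝ) ^ 2 * t)
      ≤ 2 / t * Real.exp ((n : ℝ) ^ 2 * (t / 2)) * ‖c n‖ * Real.exp (-(n : ℝ) ^ 2 * t) := by
        rw [hnorm]; gcongr
    _ = 2 / t * (‖c n‖ * Real.exp (-(n : ℝ) ^ 2 * (t / 2))) := by rw [← hexp]; ring

lemma derivSymbol_sq_mul (hc : HeatSummable c) : HeatSummable (derivSymbol ^ 2 * c) := by
  rw [sq, mul_assoc]
  exact hc.derivSymbol_mul.derivSymbol_mul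

lemma summable_heatMode (hc : HeatSummable c) {t : ℝ} (ht : 0 < t) (x : ℝ) :
    Summable fun n => c n * heatMode n t x :=
  .of_norm_bounded (hc t ht) fun n => by rw [norm_mul, norm_heatMode]

lemma hasSum_heatSeries (hc : HeatSummable c) {t : ℝ} (ht : 0 < t) (x : ℝ) :
    HasSum (fun n => c n * heatMode n t x) (heatSeries c t x) :=
  (hc.summable_heatMode ht x).hasSum

lemma hasFDerivAt_heatSeries (hc : HeatSummable c) {p : ℝ × ℝ} (hp : 0 < p.1) :
    HasFDerivAt (fun p : ℝ × ℝ => heatSeries c p.1 p.2)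
      (linearOfPartials (heatSeries (derivSymbol ^ 2 * c) p.1 p.2)
        (heatSeries (derivSymbol * c) p.1 p.2)) p := by
  have hp₂ : p ∈ Set.Ioi (p.1 / 2) ×ˢ (Set.univ : Set ℝ) := ⟨half_lt_self hp, trivial⟩
  rw [← (hasSum_linearOfPartials (hc.derivSymbol_sq_mul.hasSum_heatSeries hp p.2)
    (hc.derivSymbol_mul.hasSum_heatSeries hp p.2)).tsum_eq]
  refine hasFDerivAt_tsum_of_isPreconnected (𝕜 := ℝ)
    (f := fun n (q : ℝ × ℝ) => c n * heatMode n q.1 q.2)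
    (f' := fun n q => linearOfPartials ((derivSymbol ^ 2 * c) n * heatMode n q.1 q.2)
      ((derivSymbol * c) n * heatMode n q.1 q.2))
    ((hc.derivSymbol_sq_mul _ (half_pos hp)).add (hc.derivSymbol_mul _ (half_pos hp)))
    (isOpen_Ioi.prod isOpen_univ) ((convex_Ioi _).prod convex_univ).isPreconnected
    (fun n q _ => ?_) (fun n q hq => ?_) hp₂ (hc.summable_heatMode hp p.2) hp₂
  · refine ((hasFDerivAt_heatMode n q).const_mul (c n)).congr_fderiv ?_
    ext <;> simp [linearOfPartials] <;> ring
  · refine (norm_linearOfPartials_le _ _).trans ?_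
    have hexp : Real.exp (-(n : ℝ) ^ 2 * q.1) ≤ Real.exp (-(n : ℝ) ^ 2 * (p.1 / 2)) :=
      Real.exp_le_exp.2 <| mul_le_mul_of_nonpos_left (le_of_lt hq.1) (by nlinarith)
    rw [norm_mul, norm_mul, norm_heatMode]
    gcongr

lemma contDiffOn_heatSeries (hc : HeatSummable c) :
    ContDiffOn ℝ (⊤ : ℕ∞) (fun p : ℝ × ℝ => heatSeries c p.1 p.2)
      (Set.Ioi (0 : ℝ) ×ˢ (Set.univ : Set ℝ)) := by
  rw [contDiffOn_infty]
  intro k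
  induction k generalizing c with
  | zero =>
    rw [Nat.cast_zero, contDiffOn_zero]
    exact fun p hp => (hc.hasFDerivAt_heatSeries hp.1).continuousAt.continuousWithinAt
  | succ k ih =>
    rw [Nat.cast_succ, contDiffOn_succ_iff_fderiv_of_isOpen (isOpen_Ioi.prod isOpen_univ)]
    refine ⟨fun p hp =>
      (hc.hasFDerivAt_heatSeries hp.1).differentiableAt.differentiableWithinAt, by simp, ?_⟩
    refine ContDiffOn.congr ?_ fun p hp => (hc.hasFDerivAt_heatSeries hp.1).fderiv
    exact (contDiffOn_const.smulRight (ih hc.derivSymbol_sq_mul)).add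
      (contDiffOn_const.smulRight (ih hc.derivSymbol_mul))

lemma hasDerivAt_heatSeries_time (hc : HeatSummable c) {t : ℝ} (ht : 0 < t) (x : ℝ) :
    HasDerivAt (fun s => heatSeries c s x) (heatSeries (derivSymbol ^ 2 * c) t x) t := by
  have h := (hc.hasFDerivAt_heatSeries (p := (t, x)) ht).comp_hasDerivAt t
    ((hasDerivAt_id t).prodMk (hasDerivAt_const t x))
  simpa [Function.comp_def, linearOfPartials] using h

lemma hasDerivAt_heatSeries_space (hc : HeatSummable c) {t : ℝ} (ht : 0 < t) (x : ℝ) :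
    HasDerivAt (fun z => heatSeries c t z) (heatSeries (derivSymbol * c) t x) x := by
  have h := (hc.hasFDerivAt_heatSeries (p := (t, x)) ht).comp_hasDerivAt x
    ((hasDerivAt_const x t).prodMk (hasDerivAt_id x))
  simpa [Function.comp_def, linearOfPartials] using h

end HeatSummable

/-- The Fourier–Stieltjes coefficient `∫ exp (-iny) ψ(y) dμ(y)` of the complex measure `ψ μ`, in the
normalisation without `1/(2π)`; the exponential is written as the heat mode at time `0`. -/
noncomputable def fourierStieltjesCoeff (μ : Measure ℝ) (ψ : ℝ → ℂ) (n : ℤ) : ℂ :=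
  ∫ y, heatMode n 0 (-y) * ψ y ∂μ

lemma norm_fourierStieltjesCoeff_le (μ : Measure ℝ) (ψ : ℝ → ℂ) (n : ℤ) :
    ‖fourierStieltjesCoeff μ ψ n‖ ≤ ∫ y, ‖ψ y‖ ∂μ :=
  (norm_integral_le_integral_norm _).trans_eq <| by simp [norm_heatMode]

lemma HeatSummable.integral_heatSeries_sub_mul {c : ℤ → ℂ} (hc : HeatSummable c)
    {μ : Measure ℝ} {ψ : ℝ → ℂ} (hψ : Integrable ψ μ) {t : ℝ} (ht : 0 < t) (x : ℝ) :
    ∫ y, heatSeries c t (x - y) * ψ y ∂μ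
      = heatSeries (c * fourierStieltjesCoeff μ ψ) t x := by
  have hnorm (n : ℤ) (y : ℝ) : ‖c n * heatMode n t (x - y) * ψ y‖
      = ‖c n‖ * Real.exp (-(n : ℝ) ^ 2 * t) * ‖ψ y‖ := by
    rw [norm_mul, norm_mul, norm_heatMode]
  have hcont (n : ℤ) : Continuous fun y : ℝ => c n * heatMode n t (x - y) := by
    unfold heatMode; fun_prop
  have hint (n : ℤ) : Integrable (fun y => c n * heatMode n t (x - y) * ψ y) μ :=
    (hψ.norm.const_mul _).mono' ((hcont n).aestronglyMeasurable.mul hψ.1)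
      (.of_forall fun y => (hnorm n y).le)
  have hsum : Summable fun n : ℤ => ∫ y, ‖c n * heatMode n t (x - y) * ψ y‖ ∂μ := by
    simp only [hnorm, integral_const_mul]
    exact (hc t ht).mul_right _
  have hfactor (n : ℤ) (y : ℝ) : c n * heatMode n t (x - y) * ψ y
      = c n * heatMode n t x * (heatMode n 0 (-y) * ψ y) := by
    have hmode := heatMode_add n t 0 x (-y)
    rw [add_zero, ← sub_eq_add_neg] at hmode
    rw [hmode]
    ring
  calc ∫ y, heatSeries c t (x - y) * ψ y ∂μ
      = ∫ y, ∑' n : ℤ, c n * heatMode n t (x - y) * ψ y ∂μ := by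
        simp only [heatSeries, tsum_mul_right]
    _ = ∑' n : ℤ, ∫ y, c n * heatMode n t (x - y) * ψ y ∂μ :=
        (integral_tsum_of_summable_integral_norm hint hsum).symm
    _ = ∑' n : ℤ, c n * heatMode n t x * fourierStieltjesCoeff μ ψ n := by
        simp only [hfactor, integral_const_mul, fourierStieltjesCoeff]
    _ = heatSeries (c * fourierStieltjesCoeff μ ψ) t x := by
        simp only [heatSeries, Pi.mul_apply, mul_right_comm]

/-- The real function `F` is given for `t > 0` by the heat series with summable coefficients `c`.
The equation is stated in `ℂ`, so it includes that the series takes real values; nothing is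
required of `F` at `t ≤ 0`. -/
structure HasHeatSeries (F : ℝ → ℝ → ℝ) (c : ℤ → ℂ) : Prop where
  heatSummable : HeatSummable c
  ofReal_eq : ∀ t x : ℝ, 0 < t → (F t x : ℂ) = heatSeries c t x

lemma ofReal_deriv_eq_of_hasDerivAt {f : ℝ → ℝ} {z : ℂ} {x : ℝ}
    (h : HasDerivAt (fun y => (f y : ℂ)) z x) : ((deriv f x : ℝ) : ℂ) = z := by
  have hf : HasDerivAt f z.re x := by
    simpa [Function.comp_def] using Complex.reCLM.hasFDerivAt.comp_hasDerivAt x h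
  rw [hf.deriv]
  exact hf.ofReal_comp.unique h

namespace HasHeatSeries

variable {F G : ℝ → ℝ → ℝ} {c : ℤ → ℂ}

lemma unique (hF : HasHeatSeries F c) (hG : HasHeatSeries G c) {t : ℝ} (ht : 0 < t) (x : ℝ) :
    F t x = G t x :=
  Complex.ofReal_injective <| (hF.ofReal_eq t x ht).trans (hG.ofReal_eq t x ht).symm

lemma apply_add_two_pi (hF : HasHeatSeries F c) {t : ℝ} (ht : 0 < t) (x : ℝ) :
    F t (x + 2 * π) = F t x := by
  apply Complex.ofReal_injective
  simp only [hF.ofReal_eq t _ ht, heatSeries, heatMode_add_two_pi]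

lemma contDiffOn (hF : HasHeatSeries F c) :
    ContDiffOn ℝ (⊤ : ℕ∞) (fun p : ℝ × ℝ => F p.1 p.2)
      (Set.Ioi (0 : ℝ) ×ˢ (Set.univ : Set ℝ)) := by
  have hre := Complex.reCLM.contDiff.comp_contDiffOn hF.heatSummable.contDiffOn_heatSeries
  exact hre.congr fun p hp => by
    simp [← hF.ofReal_eq p.1 p.2 hp.1]

lemma deriv_space (hF : HasHeatSeries F c) :
    HasHeatSeries (fun t x => deriv (F t) x) (derivSymbol * c) where
  heatSummable := hF.heatSummable.derivSymbol_mul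
  ofReal_eq t x ht := by
    apply ofReal_deriv_eq_of_hasDerivAt
    simpa only [hF.ofReal_eq t _ ht] using hF.heatSummable.hasDerivAt_heatSeries_space ht x

lemma deriv_time (hF : HasHeatSeries F c) :
    HasHeatSeries (fun t x => deriv (fun s => F s x) t) (derivSymbol ^ 2 * c) where
  heatSummable := hF.heatSummable.derivSymbol_sq_mul
  ofReal_eq t x ht := by
    have heq : (fun s => (F s x : ℂ)) =ᶠ[nhds t] fun s => heatSeries c s x := by
      filter_upwards [lt_mem_nhds ht] with s hs using hF.ofReal_eq s x hs
    exact ofReal_deriv_eq_of_hasDerivAt <|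
      (hF.heatSummable.hasDerivAt_heatSeries_time ht x).congr_of_eventuallyEq heq

lemma iterate_deriv_space (hF : HasHeatSeries F c) (n : ℕ) :
    HasHeatSeries (fun t x => deriv^[n] (F t) x) (derivSymbol ^ n * c) := by
  induction n with
  | zero => simpa using hF
  | succ n ih =>
    simp only [Function.iterate_succ_apply', pow_succ', mul_assoc]
    exact ih.deriv_space

lemma iterate_deriv_time (hF : HasHeatSeries F c) (m : ℕ) :
    HasHeatSeries (fun t x => deriv^[m] (fun s => F s x) t) ((derivSymbol ^ 2) ^ m * c) := by
  induction m with
  | zero => simpa using hF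
  | succ m ih =>
    simp only [Function.iterate_succ_apply', pow_succ' (derivSymbol ^ 2), mul_assoc]
    exact ih.deriv_time

lemma iterate_deriv (hF : HasHeatSeries F c) (m n : ℕ) :
    HasHeatSeries (fun t x => deriv^[m] (fun s => deriv^[n] (F s) x) t)
      ((derivSymbol ^ 2) ^ m * derivSymbol ^ n * c) := by
  rw [mul_assoc]
  exact (hF.iterate_deriv_space n).iterate_deriv_time m

lemma deriv_time_eq_deriv_deriv_space (hF : HasHeatSeries F c) {t : ℝ} (ht : 0 < t) (x : ℝ) :
    deriv (fun s => F s x) t = deriv (deriv (F t)) x := by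
  have hspace := hF.deriv_space.deriv_space
  rw [← mul_assoc, ← sq] at hspace
  exact hF.deriv_time.unique hspace ht x

lemma integral_sub_mul {μ : Measure ℝ} {ψ : ℝ → ℝ} (hF : HasHeatSeries F c)
    (hψ : Integrable ψ μ) :
    HasHeatSeries (fun t x => ∫ y, F t (x - y) * ψ y ∂μ)
      (c * fourierStieltjesCoeff μ fun y => (ψ y : ℂ)) where
  heatSummable := hF.heatSummable.mul_of_norm_le (norm_fourierStieltjesCoeff_le μ _)
  ofReal_eq t x ht := by
    rw [← hF.heatSummable.integral_heatSeries_sub_mul (ψ := fun y => (ψ y : ℂ))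
      hψ.ofReal ht, ← integral_complex_ofReal]
    simp only [Complex.ofReal_mul, hF.ofReal_eq t _ ht]

end HasHeatSeries

lemma tsum_int_eq_zero_add_tsum_succ_add_neg_succ {G : Type*} [AddCommGroup G]
    [TopologicalSpace G] [IsTopologicalAddGroup G] [T2Space G] {f : ℤ → G} (hf : Summable f) :
    ∑' n : ℤ, f n = f 0 + ∑' n : ℕ, (f (n + 1) + f (-(n + 1))) := by
  have h := tsum_nat_add_neg hf
  rw [hf.nat_add_neg.tsum_eq_zero_add, Nat.cast_zero, neg_zero, add_right_comm] at h
  simpa using (add_right_cancel h).symm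

lemma hasHeatSeries_Φ : HasHeatSeries Φ fun _ => 1 / (2 * π) where
  heatSummable := .of_norm_le fun _ => le_rfl
  ofReal_eq t x ht := by
    have hmode : Summable fun n : ℤ => heatMode n t x := by
      simpa using (HeatSummable.of_norm_le (c := fun _ => 1) fun _ => le_rfl).summable_heatMode ht x
    have hpair (n : ℕ) : heatMode (n + 1) t x + heatMode (-(n + 1)) t x
        = ((2 * (Real.exp (-((n : ℝ) + 1) ^ 2 * t) * Real.cos (((n : ℝ) + 1) * x)) : ℝ) : ℂ) := by
      exact_mod_cast heatMode_add_heatMode_neg (n + 1) t x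
    rw [heatSeries, tsum_mul_left, tsum_int_eq_zero_add_tsum_succ_add_neg_succ hmode, Φ]
    simp only [hpair, ← Complex.ofReal_tsum, tsum_mul_left]
    rw [show heatMode 0 t x = 1 by simp [heatMode]]
    push_cast
    ring

theorem statement_11_general {μ : Measure ℝ} {ψ : ℝ → ℝ} (hψ : Integrable ψ μ) :
    ContDiffOn ℝ (⊤ : ℕ∞) (fun p : ℝ × ℝ => ∫ y, Φ p.1 (p.2 - y) * ψ y ∂μ)
      (Set.Ioi (0 : ℝ) ×ˢ (Set.univ : Set ℝ)) ∧
    (∀ t x : ℝ, 0 < t →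
      ∫ y, Φ t (x + 2 * π - y) * ψ y ∂μ = ∫ y, Φ t (x - y) * ψ y ∂μ) ∧
    (∀ t x : ℝ, 0 < t →
      deriv (fun s : ℝ => ∫ y, Φ s (x - y) * ψ y ∂μ) t
        = deriv (deriv fun z : ℝ => ∫ y, Φ t (z - y) * ψ y ∂μ) x) ∧
    (∀ (m n : ℕ) (t x : ℝ), 0 < t →
      deriv^[m] (fun s : ℝ => deriv^[n] (fun z : ℝ => ∫ y, Φ s (z - y) * ψ y ∂μ) x) t
        = ∫ y, deriv^[m] (fun s : ℝ => deriv^[n] (fun z : ℝ => Φ s z) (x - y)) t * ψ y ∂μ) := by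
  have hΨ := hasHeatSeries_Φ.integral_sub_mul hψ
  refine ⟨hΨ.contDiffOn, fun t x ht => hΨ.apply_add_two_pi ht x,
    fun t x ht => hΨ.deriv_time_eq_deriv_deriv_space ht x, fun m n t x ht => ?_⟩
  have hintegral := (hasHeatSeries_Φ.iterate_deriv m n).integral_sub_mul hψ
  rw [mul_assoc] at hintegral
  exact (hΨ.iterate_deriv m n).unique hintegral ht x

/-- If `ψ : ℝ → ℝ` is measurable, `2π`-periodic and integrable on `[0,2π]`, then
`Ψ(t,x) := ∫₀^{2π} Φ(t,x−y)·ψ(y) dy` is infinitely differentiable on `(0,∞) × ℝ`, is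
`2π`-periodic in `x`, satisfies the heat equation `∂ₜΨ = ∂ₓₓΨ` pointwise on `(0,∞) × ℝ`,
and all partial derivatives may be computed by differentiating under the integral. -/
theorem statement_11 (ψ : ℝ → ℝ) (hmeas : Measurable ψ)
    (hper : ∀ x : ℝ, ψ (x + 2 * π) = ψ x)
    (hint : IntegrableOn ψ (Set.Icc (0 : ℝ) (2 * π))) :
    ContDiffOn ℝ (⊤ : ℕ∞) (fun p : ℝ × ℝ => Ψ ψ p.1 p.2) (Set.Ioi (0 : ℝ) ×ˢ (Set.univ : Set ℝ)) ∧
    (∀ t x : ℝ, 0 < t → Ψ ψ t (x + 2 * π) = Ψ ψ t x) ∧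
    (∀ t x : ℝ, 0 < t →
      deriv (fun s : ℝ => Ψ ψ s x) t = deriv (deriv (fun y : ℝ => Ψ ψ t y)) x) ∧
    (∀ (m n : ℕ) (t x : ℝ), 0 < t →
      deriv^[m] (fun s : ℝ => deriv^[n] (fun y : ℝ => Ψ ψ s y) x) t
        = ∫ y in (0 : ℝ)..(2 * π),
            deriv^[m] (fun s : ℝ => deriv^[n] (fun z : ℝ => Φ s z) (x - y)) t * ψ y) := by
  simpa only [Ψ, intervalIntegral.integral_of_le two_pi_pos.le] using
    statement_11_general (hint.mono_set Set.Ioc_subset_Icc_self)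
end

section
/- Let ψ : ℝ → ℝ be measurable, 2π-periodic, and integrable on [0,2π], and set Ψ(t,x) := ∫₀^{2π} Φ(t, x−y)·ψ(y) dy for t > 0. Then Ψ(t,·) converges to ψ in L¹ as t → 0⁺: lim_{t→0⁺} ∫₀^{2π} |Ψ(t,x) − ψ(x)| dx = 0. -/
open MeasureTheory Real Filter

/-!
For a probability density `k`, the difference `k ⋆ f - f` is a `k`-average of the functions
`f(· - y) - f`, so `‖k ⋆ f - f‖₁` is at most the `k`-mean of the `L¹` modulus of continuity `ω` of
`f`, a continuous function vanishing at `0`. By Korovkin's argument such means tend to `ω 0 = 0` on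
the circle as soon as the first Fourier coefficient of `k` tends to `1`: the `k`-mean of `1 - cos`
then tends to `0`, while `ω ≤ ε + C (1 - cos)` because `1 - cos` is nonnegative and vanishes only at
`0`. For the heat kernel this coefficient is `exp (-t)`, and positivity follows from Poisson
summation, which turns the cosine series into a sum of Gaussians.
-/

section Modulus

variable {G E : Type*} [AddGroup G] [MeasurableSpace G] [NormedAddCommGroup E]

/-- The `L¹` modulus of continuity `y ↦ ‖f(· - y) - f‖₁` of a function on a group, which controls
the `L¹` distance from `f` to its averages over right translates. -/
noncomputable def l1Modulus (μ : Measure G) (f : G → E) (y : G) : ℝ :=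
  ∫ x, ‖f (x - y) - f x‖ ∂μ

lemma l1Modulus_zero (μ : Measure G) (f : G → E) : l1Modulus μ f 0 = 0 := by
  simp [l1Modulus]

lemma continuous_l1Modulus [TopologicalSpace G] [IsTopologicalAddGroup G] [BorelSpace G]
    {μ : Measure G} [IsLocallyFiniteMeasure μ] [μ.InnerRegularCompactLTTop]
    [μ.IsAddRightInvariant] {f : G → E} (hf : Integrable f μ) :
    Continuous (l1Modulus μ f) := by
  have hf₁ : MemLp f 1 μ := memLp_one_iff_integrable.2 hf
  let shift : C(G, C(G, G)) := ContinuousMap.curry ⟨fun p : G × G => p.2 - p.1, by fun_prop⟩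
  have hshift (y : G) : MeasurePreserving (shift y) μ μ := measurePreserving_sub_right μ y
  have hcont : Continuous fun y => Lp.compMeasurePreserving (shift y) (hshift y) hf₁.toLp :=
    continuous_const.compMeasurePreservingLp shift.continuous hshift ENNReal.one_ne_top
  have hnorm : Continuous fun y =>
      ‖Lp.compMeasurePreserving (shift y) (hshift y) hf₁.toLp - hf₁.toLp‖ :=
    (hcont.sub continuous_const).norm
  refine hnorm.congr fun y => ?_
  rw [L1.norm_eq_integral_norm]
  refine integral_congr_ae ?_
  filter_upwards [Lp.coeFn_sub (Lp.compMeasurePreserving (shift y) (hshift y) hf₁.toLp) hf₁.toLp,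
    Lp.coeFn_compMeasurePreserving hf₁.toLp (hshift y), hf₁.coeFn_toLp,
    (hshift y).quasiMeasurePreserving.ae_eq hf₁.coeFn_toLp] with x hsub hcomp hx hxy
  rw [hsub, Pi.sub_apply, hcomp, hx, hxy]
  rfl

end Modulus

section Convolution

open ContinuousLinearMap
open scoped Convolution

variable {G E : Type*} [AddGroup G] [MeasurableSpace G] [NormedAddCommGroup E] [NormedSpace ℝ E]
  [CompleteSpace E] {μ : Measure G} {k : G → ℝ} {f : G → E}

lemma norm_convolution_sub_le (hk0 : 0 ≤ k) (hk1 : ∫ y, k y ∂μ = 1) {x : G}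
    (hconv : ConvolutionExistsAt k f x (lsmul ℝ ℝ) μ) :
    ‖(k ⋆[lsmul ℝ ℝ, μ] f) x - f x‖ ≤ ∫ y, k y * ‖f (x - y) - f x‖ ∂μ := by
  have hconst : Integrable (fun y => k y • f x) μ :=
    (integrable_of_integral_eq_one hk1).smul_const (f x)
  have hconv' : Integrable (fun y => k y • f (x - y)) μ := hconv
  calc ‖(k ⋆[lsmul ℝ ℝ, μ] f) x - f x‖
      = ‖∫ y, k y • (f (x - y) - f x) ∂μ‖ := by
        simp only [smul_sub]
        rw [integral_sub hconv' hconst, integral_smul_const, hk1, one_smul, convolution_lsmul]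
    _ ≤ ∫ y, ‖k y • (f (x - y) - f x)‖ ∂μ := norm_integral_le_integral_norm _
    _ = ∫ y, k y * ‖f (x - y) - f x‖ ∂μ := by
        simp only [norm_smul, Real.norm_of_nonneg (hk0 _)]

lemma integral_norm_convolution_sub_le [MeasurableAdd₂ G] [MeasurableNeg G] [SFinite μ]
    [μ.IsAddRightInvariant] (hk0 : 0 ≤ k) (hk1 : ∫ y, k y ∂μ = 1)
    (hf : Integrable f μ) :
    ∫ x, ‖(k ⋆[lsmul ℝ ℝ, μ] f) x - f x‖ ∂μ ≤ ∫ y, k y * l1Modulus μ f y ∂μ := by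
  have hk : Integrable k μ := integrable_of_integral_eq_one hk1
  have hprod : Integrable (fun p : G × G => k p.2 * ‖f (p.1 - p.2) - f p.1‖) (μ.prod μ) := by
    have hdiff := (hk.convolution_integrand (lsmul ℝ ℝ) hf).sub (hk.smul_prod hf).swap
    refine hdiff.norm.congr (Eventually.of_forall fun p => ?_)
    simp [← smul_sub, norm_smul, abs_of_nonneg (hk0 p.2)]
  calc ∫ x, ‖(k ⋆[lsmul ℝ ℝ, μ] f) x - f x‖ ∂μ
      ≤ ∫ x, ∫ y, k y * ‖f (x - y) - f x‖ ∂μ ∂μ := by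
        refine integral_mono_ae ((hk.integrable_convolution (lsmul ℝ ℝ) hf).sub hf).norm
          hprod.integral_prod_left ?_
        filter_upwards [hk.ae_convolution_exists (lsmul ℝ ℝ) hf] with x hx
        exact norm_convolution_sub_le hk0 hk1 hx
    _ = ∫ y, ∫ x, k y * ‖f (x - y) - f x‖ ∂μ ∂μ := integral_integral_swap hprod
    _ = ∫ y, k y * l1Modulus μ f y ∂μ := by simp only [integral_const_mul, l1Modulus]

end Convolution

section Korovkin

open scoped Topology

variable {X ι : Type*} [TopologicalSpace X] [CompactSpace X] {d g : X → ℝ} {x₀ : X}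

lemma exists_forall_abs_sub_le_add_mul (hd : Continuous d) (hd0 : 0 ≤ d)
    (hdx₀ : ∀ x, d x = 0 → x = x₀) (hg : Continuous g) {ε : ℝ} (hε : 0 < ε) :
    ∃ C, ∀ x, |g x - g x₀| ≤ ε + C * d x := by
  let K : Set X := {x | ε ≤ |g x - g x₀|}
  have hK : IsCompact K := (isClosed_le (by fun_prop) (by fun_prop)).isCompact
  have hdK : ∀ x ∈ K, 0 < d x := fun x hx => (hd0 x).lt_of_ne' fun h => by
    have hx' : ε ≤ |g x - g x₀| := hx
    rw [hdx₀ x h, sub_self, abs_zero] at hx'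
    exact hε.not_ge hx'
  obtain ⟨C, hC⟩ := hK.exists_bound_of_continuousOn (f := fun x => |g x - g x₀| / d x)
    (ContinuousOn.div (by fun_prop) (by fun_prop) fun x hx => (hdK x hx).ne')
  refine ⟨|C|, fun x => ?_⟩
  by_cases hx : x ∈ K
  · have hquot : |g x - g x₀| / d x ≤ |C| := (le_abs_self _).trans ((hC x hx).trans (le_abs_self C))
    linarith [(div_le_iff₀ (hdK x hx)).1 hquot]
  · have hx' : |g x - g x₀| < ε := lt_of_not_ge hx
    linarith [mul_nonneg (abs_nonneg C) (hd0 x)]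

lemma abs_integral_mul_sub_le [MeasurableSpace X] [OpensMeasurableSpace X] {μ : Measure X}
    {k : X → ℝ} (hk0 : 0 ≤ k) (hk1 : ∫ x, k x ∂μ = 1) (hd : Continuous d) (hg : Continuous g)
    {a ε C : ℝ} (hC : ∀ x, |g x - a| ≤ ε + C * d x) :
    |∫ x, k x * g x ∂μ - a| ≤ ε + C * ∫ x, k x * d x ∂μ := by
  have hk : Integrable k μ := integrable_of_integral_eq_one hk1
  have hmul {h : X → ℝ} (hh : Continuous h) : Integrable (fun x => k x * h x) μ := by
    obtain ⟨c, hc⟩ := isCompact_univ.exists_bound_of_continuousOn hh.continuousOn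
    exact hk.mul_bdd hh.aestronglyMeasurable (ae_of_all _ fun x => hc x trivial)
  calc |∫ x, k x * g x ∂μ - a| = |∫ x, k x * (g x - a) ∂μ| := by
        simp only [mul_sub]
        rw [integral_sub (hmul hg) (hk.mul_const a), integral_mul_const, hk1, one_mul]
    _ ≤ ∫ x, |k x * (g x - a)| ∂μ := abs_integral_le_integral_abs
    _ ≤ ∫ x, (k x * ε + C * (k x * d x)) ∂μ := by
        refine integral_mono (hmul (by fun_prop)).abs ((hk.mul_const ε).add ((hmul hd).const_mul C))
          fun x => ?_
        simp only [abs_mul, abs_of_nonneg (hk0 x)]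
        linarith [mul_le_mul_of_nonneg_left (hC x) (hk0 x)]
    _ = ε + C * ∫ x, k x * d x ∂μ := by
        rw [integral_add (hk.mul_const ε) ((hmul hd).const_mul C), integral_mul_const, hk1, one_mul,
          integral_const_mul]

theorem tendsto_integral_mul_of_tendsto_integral_mul_zero
    [MeasurableSpace X] [OpensMeasurableSpace X] {μ : Measure X} {l : Filter ι} {k : ι → X → ℝ}
    (hk0 : ∀ᶠ i in l, 0 ≤ k i) (hk1 : ∀ᶠ i in l, ∫ x, k i x ∂μ = 1)
    (hd : Continuous d) (hd0 : 0 ≤ d) (hdx₀ : ∀ x, d x = 0 → x = x₀)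
    (hkd : Tendsto (fun i => ∫ x, k i x * d x ∂μ) l (𝓝 0)) (hg : Continuous g) :
    Tendsto (fun i => ∫ x, k i x * g x ∂μ) l (𝓝 (g x₀)) := by
  rw [Metric.tendsto_nhds]
  intro ε hε
  obtain ⟨C, hC⟩ := exists_forall_abs_sub_le_add_mul hd hd0 hdx₀ hg (half_pos hε)
  have hsmall : ∀ᶠ i in l, C * ∫ x, k i x * d x ∂μ < ε / 2 := by
    have hlim := hkd.const_mul C
    rw [mul_zero] at hlim
    exact hlim.eventually_lt_const (half_pos hε)
  filter_upwards [hk0, hk1, hsmall] with i hi0 hi1 hi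
  rw [Real.dist_eq]
  linarith [abs_integral_mul_sub_le hi0 hi1 hd hg hC]

end Korovkin

section AddCircle

open ContinuousLinearMap AddCircle
open scoped Convolution Topology

variable {T : ℝ}

lemma norm_fourier_apply (n : ℤ) (x : AddCircle T) : ‖fourier n x‖ = 1 := by
  rw [fourier_apply, Circle.norm_coe]

lemma re_fourier_le_one (n : ℤ) (x : AddCircle T) : (fourier n x).re ≤ 1 :=
  (Complex.re_le_norm _).trans (norm_fourier_apply n x).le

variable [hT : Fact (0 < T)]

lemma fourierCoeff_of_hasSum {c : ℤ → ℂ} (hc : Summable c) {F : AddCircle T → ℂ}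
    (hF : ∀ x, HasSum (fun n => c n * fourier n x) (F x)) (m : ℤ) :
    fourierCoeff F m = c m := by
  have hint (n : ℤ) : ∫ x : AddCircle T, c n * (fourier (-m) x * fourier n x) ∂haarAddCircle
      = c n * (Pi.single n 1 : ℤ → ℂ) m := by
    rw [integral_const_mul, ← fourierCoeff_fourier (T := T) n]
    rfl
  have hsum := hasSum_integral_of_summable_integral_norm (μ := haarAddCircle)
    (F := fun n (x : AddCircle T) => c n * (fourier (-m) x * fourier n x))
    (fun n => Continuous.integrable_of_hasCompactSupport (by fun_prop)
      (HasCompactSupport.of_compactSpace _))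
    (by simpa [-fourier_apply, norm_fourier_apply] using hc.norm)
  simp only [hint] at hsum
  have hterm := hasSum_single (f := fun n => c n * (Pi.single n 1 : ℤ → ℂ) m) m fun n hn => by
    simp [Pi.single_eq_of_ne' hn]
  rw [Pi.single_eq_same, mul_one] at hterm
  rw [← hsum.unique hterm, fourierCoeff]
  refine integral_congr_ae (ae_of_all _ fun x => ?_)
  beta_reduce
  rw [smul_eq_mul, ← ((hF x).mul_left _).tsum_eq]
  exact tsum_congr fun n => mul_left_comm _ _ _

lemma fourierCoeff_zero_ofReal (k : AddCircle T → ℝ) :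
    fourierCoeff (fun x => (k x : ℂ)) 0 = ∫ x, k x ∂haarAddCircle := by
  simp [fourierCoeff, integral_complex_ofReal]

lemma integral_mul_one_sub_re_fourier {k : AddCircle T → ℝ} (hk : Integrable k haarAddCircle)
    (n : ℤ) :
    ∫ x, k x * (1 - (fourier n x).re) ∂haarAddCircle
      = (fourierCoeff (fun x => (k x : ℂ)) 0 - fourierCoeff (fun x => (k x : ℂ)) n).re := by
  have hcoeff (m : ℤ) : Integrable (fun x => fourier (-m) x • (k x : ℂ)) haarAddCircle :=
    hk.ofReal.fourier_smul (-m)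
  calc ∫ x, k x * (1 - (fourier n x).re) ∂haarAddCircle
      = ∫ x, (fourier (-0) x • (k x : ℂ) - fourier (-n) x • (k x : ℂ)).re ∂haarAddCircle := by
        refine integral_congr_ae (ae_of_all _ fun x => ?_)
        simp [fourier_neg, -fourier_apply, fourier_zero, mul_sub, mul_comm]
    _ = (fourierCoeff (fun x => (k x : ℂ)) 0 - fourierCoeff (fun x => (k x : ℂ)) n).re := by
        rw [fourierCoeff, fourierCoeff, ← integral_sub (hcoeff 0) (hcoeff n)]
        exact integral_re ((hcoeff 0).sub (hcoeff n))

lemma eq_zero_of_re_fourier_one_eq_one {x : AddCircle T} (hx : (fourier 1 x).re = 1) :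
    x = 0 := by
  have him : (fourier 1 x).im = 0 := by
    rw [← Complex.abs_re_eq_norm, hx, abs_one, norm_fourier_apply]
  have hone : (toCircle x : ℂ) = 1 := by
    rw [← fourier_one]
    exact Complex.ext hx him
  refine injective_toCircle hT.out.ne' (Circle.ext ?_)
  rw [hone, toCircle_zero, Circle.coe_one]

theorem tendsto_integral_norm_convolution_sub_of_tendsto_fourierCoeff {ι E : Type*}
    [NormedAddCommGroup E] [NormedSpace ℝ E] [CompleteSpace E] {l : Filter ι}
    {k : ι → AddCircle T → ℝ} (hk0 : ∀ᶠ i in l, 0 ≤ k i)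
    (hcoeff0 : ∀ᶠ i in l, fourierCoeff (fun x => (k i x : ℂ)) 0 = 1)
    (hcoeff1 : Tendsto (fun i => fourierCoeff (fun x => (k i x : ℂ)) 1) l (𝓝 1))
    {f : AddCircle T → E} (hf : Integrable f haarAddCircle) :
    Tendsto (fun i => ∫ x, ‖(k i ⋆[lsmul ℝ ℝ, haarAddCircle] f) x - f x‖ ∂haarAddCircle) l
      (𝓝 0) := by
  have hk1 : ∀ᶠ i in l, ∫ x, k i x ∂haarAddCircle = 1 := hcoeff0.mono fun i hi => by
    rw [fourierCoeff_zero_ofReal] at hi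
    exact_mod_cast hi
  have hmoment : Tendsto (fun i => ∫ x, k i x * (1 - (fourier 1 x).re) ∂haarAddCircle) l
      (𝓝 0) := by
    have hlim : Tendsto (fun i => (1 - fourierCoeff (fun x => (k i x : ℂ)) 1).re) l (𝓝 0) := by
      simpa [Function.comp_def] using (Complex.continuous_re.tendsto _).comp (hcoeff1.const_sub 1)
    refine hlim.congr' ?_
    filter_upwards [hk1, hcoeff0] with i hi hi0
    rw [integral_mul_one_sub_re_fourier (integrable_of_integral_eq_one hi), hi0]
  have hmodulus : Tendsto (fun i => ∫ y, k i y * l1Modulus haarAddCircle f y ∂haarAddCircle) l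
      (𝓝 0) := by
    rw [← l1Modulus_zero haarAddCircle f]
    exact tendsto_integral_mul_of_tendsto_integral_mul_zero hk0 hk1
      (continuous_const.sub (Complex.continuous_re.comp (fourier 1).continuous))
      (fun x => sub_nonneg.2 (re_fourier_le_one 1 x))
      (fun x hx => eq_zero_of_re_fourier_one_eq_one (sub_eq_zero.1 hx).symm) hmoment
      (continuous_l1Modulus hf)
  refine squeeze_zero' (Eventually.of_forall fun i => integral_nonneg fun x => norm_nonneg _) ?_
    hmodulus
  filter_upwards [hk0, hk1] with i hi0 hi1
  exact integral_norm_convolution_sub_le hi0 hi1 hf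

end AddCircle

section Periodization

open ContinuousLinearMap AddCircle
open scoped Convolution

variable {T : ℝ} [hT : Fact (0 < T)] {E : Type*} [NormedAddCommGroup E]

lemma integrable_liftIoc {a : ℝ} {f : ℝ → E} (hf : IntegrableOn f (Set.Ioc a (a + T))) :
    Integrable (liftIoc T a f) haarAddCircle := by
  have hpres : MeasurePreserving (fun x : AddCircle T => (equivIoc T a x : ℝ)) volume
      (volume.restrict (Set.Ioc a (a + T))) :=
    (measurePreserving_subtype_coe measurableSet_Ioc).comp (measurePreserving_equivIoc T)
  have hvol : Integrable (liftIoc T a f) (volume : Measure (AddCircle T)) :=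
    hpres.integrable_comp_of_integrable hf
  rw [volume_eq_smul_haarAddCircle] at hvol
  exact (integrable_smul_measure (by simpa using hT.out) ENNReal.ofReal_ne_top).1 hvol

variable [NormedSpace ℝ E]

lemma integral_haarAddCircle_eq_intervalIntegral (a : ℝ) (F : AddCircle T → E) :
    ∫ x, F x ∂haarAddCircle = T⁻¹ • ∫ x in a..a + T, F (x : AddCircle T) := by
  rw [AddCircle.integral_haarAddCircle, AddCircle.intervalIntegral_preimage]

lemma convolution_liftIoc (a : ℝ) (k : AddCircle T → ℝ) (f : ℝ → E) (x : AddCircle T) :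
    (k ⋆[lsmul ℝ ℝ, haarAddCircle] liftIoc T a f) x
      = T⁻¹ • ∫ y in a..a + T, k (x - (y : AddCircle T)) • f y := by
  rw [convolution_lsmul_swap, integral_haarAddCircle_eq_intervalIntegral a]
  congr 1
  refine intervalIntegral.integral_congr_Ioo_of_le (le_add_of_nonneg_right hT.out.le) fun y hy => ?_
  rw [liftIoc_coe_apply (Set.Ioo_subset_Ioc_self hy)]

lemma integral_norm_convolution_liftIoc_sub (a : ℝ) (k : AddCircle T → ℝ) (f : ℝ → E) :
    ∫ x, ‖(k ⋆[lsmul ℝ ℝ, haarAddCircle] liftIoc T a f) x - liftIoc T a f x‖ ∂haarAddCircle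
      = T⁻¹ * ∫ x in a..a + T,
          ‖(T⁻¹ • ∫ y in a..a + T, k ((x - y : ℝ) : AddCircle T) • f y) - f x‖ := by
  rw [integral_haarAddCircle_eq_intervalIntegral a, smul_eq_mul]
  congr 1
  refine intervalIntegral.integral_congr_Ioo_of_le (le_add_of_nonneg_right hT.out.le) fun x hx => ?_
  rw [convolution_liftIoc, liftIoc_coe_apply (Set.Ioo_subset_Ioc_self hx)]
  rfl

end Periodization

section HeatKernel

open HurwitzZeta AddCircle
open scoped Topology

lemma evenKernel_nonneg (a : UnitAddCircle) {t : ℝ} (ht : 0 < t) : 0 ≤ evenKernel a t := by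
  induction a using QuotientAddGroup.induction_on with
  | H a => exact (hasSum_int_evenKernel a ht).nonneg fun n => (exp_pos _).le

lemma cosKernel_nonneg (a : UnitAddCircle) {t : ℝ} (ht : 0 < t) : 0 ≤ cosKernel a t := by
  have hfunc := evenKernel_functional_equation a (1 / t)
  rw [one_div_one_div] at hfunc
  have hpos : 0 < 1 / (1 / t) ^ (1 / 2 : ℝ) := by positivity
  exact nonneg_of_mul_nonneg_right (hfunc ▸ evenKernel_nonneg a (one_div_pos.2 ht)) hpos

lemma Φ_periodic (t : ℝ) : Function.Periodic (Φ t) (2 * π) := fun x => by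
  have hcos (n : ℕ) : cos (((n : ℝ) + 1) * (x + 2 * π)) = cos (((n : ℝ) + 1) * x) := by
    rw [mul_add]
    exact_mod_cast cos_add_nat_mul_two_pi _ (n + 1)
  simp only [Φ, hcos]

lemma two_pi_mul_Φ_eq_cosKernel {t : ℝ} (ht : 0 < t) (x : ℝ) :
    2 * π * Φ t x = cosKernel ((x / (2 * π) : ℝ) : UnitAddCircle) (t / π) := by
  have hterm (n : ℕ) : 2 * cos (2 * π * (x / (2 * π)) * (n + 1)) * exp (-π * (n + 1) ^ 2 * (t / π))
      = 2 * (exp (-((n : ℝ) + 1) ^ 2 * t) * cos (((n : ℝ) + 1) * x)) := by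
    rw [mul_div_cancel₀ x two_pi_pos.ne', mul_assoc, mul_comm (cos _), mul_comm x]
    congr 3
    field_simp
  have hsum := (hasSum_nat_cosKernel₀ (x / (2 * π)) (div_pos ht pi_pos)).tsum_eq
  simp only [hterm, tsum_mul_left] at hsum
  rw [sub_eq_iff_eq_add'.1 hsum.symm, Φ, mul_add, mul_one_div_cancel two_pi_pos.ne', ← mul_assoc,
    mul_assoc 2 π, mul_one_div_cancel pi_ne_zero, mul_one]

lemma Φ_nonneg {t : ℝ} (ht : 0 < t) (x : ℝ) : 0 ≤ Φ t x := by
  refine nonneg_of_mul_nonneg_right ?_ two_pi_pos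
  rw [two_pi_mul_Φ_eq_cosKernel ht]
  exact cosKernel_nonneg _ (div_pos ht pi_pos)

lemma hasSum_exp_mul_fourier {t : ℝ} (ht : 0 < t) (x : ℝ) :
    HasSum (fun n : ℤ => (exp (-n ^ 2 * t) : ℂ) * fourier n (x : AddCircle (2 * π)))
      (2 * π * Φ t x : ℝ) := by
  rw [two_pi_mul_Φ_eq_cosKernel ht]
  convert hasSum_int_cosKernel (x / (2 * π)) (div_pos ht pi_pos) using 2 with n
  rw [mul_comm, fourier_coe_apply]
  congr 2
  · push_cast
    field_simp
  · field_simp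

/-- The heat kernel on the circle, as a density with respect to the Haar probability measure; hence
the factor `2 * π`. -/
noncomputable def circleHeatKernel (t : ℝ) (x : AddCircle (2 * π)) : ℝ :=
  2 * π * (Φ_periodic t).lift x

lemma circleHeatKernel_coe (t x : ℝ) :
    circleHeatKernel t (x : AddCircle (2 * π)) = 2 * π * Φ t x := by
  rw [circleHeatKernel, Function.Periodic.lift_coe]

lemma circleHeatKernel_nonneg {t : ℝ} (ht : 0 < t) : 0 ≤ circleHeatKernel t := fun x => by
  induction x using QuotientAddGroup.induction_on with
  | H x =>
    rw [Pi.zero_apply, circleHeatKernel_coe]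
    exact mul_nonneg two_pi_pos.le (Φ_nonneg ht x)

local instance : Fact (0 < 2 * π) := ⟨two_pi_pos⟩

lemma fourierCoeff_circleHeatKernel {t : ℝ} (ht : 0 < t) (n : ℤ) :
    fourierCoeff (fun x => (circleHeatKernel t x : ℂ)) n = exp (-n ^ 2 * t) := by
  have hseries (x : AddCircle (2 * π)) :
      HasSum (fun m : ℤ => (exp (-m ^ 2 * t) : ℂ) * fourier m x) (circleHeatKernel t x) := by
    induction x using QuotientAddGroup.induction_on with
    | H x =>
      rw [circleHeatKernel_coe]
      exact hasSum_exp_mul_fourier ht x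
  have hsummable : Summable fun m : ℤ => (exp (-m ^ 2 * t) : ℂ) := by
    simpa using (hseries 0).summable
  exact fourierCoeff_of_hasSum hsummable hseries n

lemma mean_circleHeatKernel_smul {E : Type*} [NormedAddCommGroup E] [NormedSpace ℝ E] (t x : ℝ)
    (f : ℝ → E) :
    (2 * π)⁻¹ • ∫ y in (0 : ℝ)..(2 * π), circleHeatKernel t ((x - y : ℝ) : AddCircle (2 * π)) • f y
      = ∫ y in (0 : ℝ)..(2 * π), Φ t (x - y) • f y := by
  simp only [circleHeatKernel_coe, mul_smul (2 * π), intervalIntegral.integral_smul,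
    inv_smul_smul₀ two_pi_pos.ne']

theorem statement_12_general {E : Type*} [NormedAddCommGroup E] [NormedSpace ℝ E] [CompleteSpace E]
    {f : ℝ → E} (hf : IntegrableOn f (Set.Ioc 0 (2 * π))) :
    Tendsto (fun t : ℝ => ∫ x in (0 : ℝ)..(2 * π),
        ‖(∫ y in (0 : ℝ)..(2 * π), Φ t (x - y) • f y) - f x‖)
      (nhdsWithin 0 (Set.Ioi 0)) (nhds 0) := by
  have hpos : ∀ᶠ t : ℝ in 𝓝[>] 0, 0 < t := eventually_mem_nhdsWithin
  have hcoeff1 : Tendsto (fun t : ℝ => fourierCoeff (fun x => (circleHeatKernel t x : ℂ)) 1)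
      (𝓝[>] 0) (𝓝 1) := by
    have hexp : Tendsto (fun t : ℝ => ((exp (-((1 : ℤ) : ℝ) ^ 2 * t) : ℝ) : ℂ)) (𝓝 0) (𝓝 1) :=
      Continuous.tendsto' (by fun_prop) _ _ (by simp)
    refine (hexp.mono_left nhdsWithin_le_nhds).congr' ?_
    filter_upwards [hpos] with t ht using (fourierCoeff_circleHeatKernel ht 1).symm
  have hcircle := tendsto_integral_norm_convolution_sub_of_tendsto_fourierCoeff
    (hpos.mono fun t ht => circleHeatKernel_nonneg ht)
    (hpos.mono fun t ht => by simp [fourierCoeff_circleHeatKernel ht]) hcoeff1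
    (integrable_liftIoc (a := 0) (by rwa [zero_add]))
  have hscaled := hcircle.const_mul (2 * π)
  simpa only [integral_norm_convolution_liftIoc_sub, zero_add, mean_circleHeatKernel_smul, mul_zero,
    mul_inv_cancel_left₀ two_pi_pos.ne'] using hscaled

end HeatKernel

/-- If `ψ : ℝ → ℝ` is measurable, `2π`-periodic and integrable on `[0,2π]`, then `Ψ(t,·)`
converges to `ψ` in `L¹` as `t → 0⁺`: `lim_{t→0⁺} ∫₀^{2π} |Ψ(t,x) − ψ(x)| dx = 0`. -/
theorem statement_12 (ψ : ℝ → ℝ) (hmeas : Measurable ψ)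
    (hper : ∀ x : ℝ, ψ (x + 2 * π) = ψ x)
    (hint : IntegrableOn ψ (Set.Icc (0 : ℝ) (2 * π))) :
    Tendsto (fun t : ℝ => ∫ x in (0 : ℝ)..(2 * π), |Ψ ψ t x - ψ x|)
      (nhdsWithin 0 (Set.Ioi 0)) (nhds 0) := by
  exact statement_12_general (hint.mono_set Set.Ioc_subset_Icc_self)
end

section
/- Let ψ : ℝ → ℝ be twice continuously differentiable and 2π-periodic with Fourier coefficients aₙ = ∫₀^{2π} ψ(x)·cos(nx) dx and bₙ = ∫₀^{2π} ψ(x)·sin(nx) dx, and set Ψ(t,x) := ∫₀^{2π} Φ(t, x−y)·ψ(y) dy for t > 0. Then for every t > 0 one has ∫₀^{2π} |Ψ(t,x) − ψ(x)|² dx = (1/π)·∑_{n=1}^∞ (1 − exp(−n²t))²·(aₙ² + bₙ²), and this quantity tends to 0 as t → 0⁺. -/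
open MeasureTheory Real Filter

/-!
The operator `f ↦ Ψ f t` is symmetric on `L²(0, 2π)`, because `Φ t` is even, and each
`x ↦ cos (m x + θ)` is an eigenfunction with eigenvalue `exp (-m² t)`. Moving the operator onto the
trigonometric function thus shows that `Ψ ψ t - ψ` has the Fourier coefficients of `ψ` multiplied by
`exp (-m² t) - 1`. Parseval's identity gives the formula, and dominated convergence, with the
coefficients of `ψ` as dominating series, gives the limit.
-/

section TrigonometricIntegrals

theorem integral_cos_int_mul_add (k : ℤ) (θ : ℝ) :
    ∫ x in (0 : ℝ)..(2 * π), cos (k * x + θ) = if k = 0 then 2 * π * cos θ else 0 := by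
  split_ifs with hk
  · simp [hk]
  · have hk' : (k : ℝ) ≠ 0 := mod_cast hk
    rw [intervalIntegral.integral_comp_mul_add cos hk', integral_cos, mul_zero, zero_add,
      add_comm, sin_add_int_mul_two_pi, sub_self, smul_zero]

theorem integral_cos_mul_sub_mul_cos {n : ℕ} (hn : n ≠ 0) (m : ℕ) (θ x : ℝ) :
    ∫ y in (0 : ℝ)..(2 * π), cos (n * (x - y)) * cos (m * y + θ)
      = if n = m then π * cos (n * x + θ) else 0 := by
  have product_to_sum (y : ℝ) : cos (n * (x - y)) * cos (m * y + θ) =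
      (1 / 2) * cos ((m - n : ℤ) * y + (n * x + θ))
        + (1 / 2) * cos ((-n - m : ℤ) * y + (n * x - θ)) := by
    have h := two_mul_cos_mul_cos (n * (x - y)) (m * y + θ)
    push_cast
    rw [show ((m : ℝ) - n) * y + (n * x + θ) = n * (x - y) + (m * y + θ) by ring,
      show (-(n : ℝ) - m) * y + (n * x - θ) = n * (x - y) - (m * y + θ) by ring]
    linarith
  simp_rw [product_to_sum]
  rw [intervalIntegral.integral_add (Continuous.intervalIntegrable (by fun_prop) _ _)
      (Continuous.intervalIntegrable (by fun_prop) _ _), intervalIntegral.integral_const_mul,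
    intervalIntegral.integral_const_mul, integral_cos_int_mul_add, integral_cos_int_mul_add,
    if_neg (show (-n - m : ℤ) ≠ 0 by omega)]
  simp only [sub_eq_zero, Nat.cast_inj, eq_comm (a := m)]
  split_ifs <;> ring

end TrigonometricIntegrals

section Integrability

variable {μ : Measure ℝ} {a b : ℝ}

theorem intervalIntegrable_ofReal {f : ℝ → ℝ} (hf : IntervalIntegrable f μ a b) :
    IntervalIntegrable (fun x => (f x : ℂ)) μ a b :=
  ⟨hf.1.ofReal, hf.2.ofReal⟩

variable [IsLocallyFiniteMeasure μ] {E : Type*} [NormedAddCommGroup E] {f : ℝ → E}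

theorem memLp_restrict_Ioc_of_continuous (hf : Continuous f) (p : ENNReal) :
    MemLp f p (μ.restrict (Set.Ioc a b)) := by
  have : IsFiniteMeasure (μ.restrict (Set.Ioc a b)) :=
    isFiniteMeasure_restrict.2 measure_Ioc_lt_top.ne
  obtain ⟨C, hC⟩ :=
    (isCompact_Icc (a := a) (b := b)).exists_bound_of_continuousOn hf.continuousOn
  exact .of_bound hf.aestronglyMeasurable C
    (ae_restrict_of_forall_mem measurableSet_Ioc fun x hx => hC x (Set.Ioc_subset_Icc_self hx))

theorem intervalIntegrable_of_memLp {p : ENNReal} (hp : 1 ≤ p) (hab : a ≤ b)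
    (hf : MemLp f p (μ.restrict (Set.Ioc a b))) : IntervalIntegrable f μ a b :=
  have : IsFiniteMeasure (μ.restrict (Set.Ioc a b)) :=
    isFiniteMeasure_restrict.2 measure_Ioc_lt_top.ne
  (intervalIntegrable_iff_integrableOn_Ioc_of_le hab).2 (hf.integrable hp)

end Integrability

section Parseval

/-- The cosine coefficient `∫₀^{2π} f(x)·cos(ξx) dx`, unnormalized. The frequency `ξ` is real so
that both natural and integer frequencies can be used. -/
noncomputable def cosCoeff (f : ℝ → ℝ) (ξ : ℝ) : ℝ :=
  ∫ x in (0 : ℝ)..(2 * π), f x * cos (ξ * x)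

/-- The sine coefficient `∫₀^{2π} f(x)·sin(ξx) dx`, with the conventions of `cosCoeff`. -/
noncomputable def sinCoeff (f : ℝ → ℝ) (ξ : ℝ) : ℝ :=
  ∫ x in (0 : ℝ)..(2 * π), f x * sin (ξ * x)

theorem cosCoeff_neg (f : ℝ → ℝ) (ξ : ℝ) : cosCoeff f (-ξ) = cosCoeff f ξ := by
  simp only [cosCoeff, neg_mul, cos_neg]

theorem sinCoeff_neg (f : ℝ → ℝ) (ξ : ℝ) : sinCoeff f (-ξ) = -sinCoeff f ξ := by
  simp only [sinCoeff, neg_mul, sin_neg, mul_neg, intervalIntegral.integral_neg]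

theorem cosCoeff_sub {f g : ℝ → ℝ} (hf : IntervalIntegrable f volume 0 (2 * π))
    (hg : IntervalIntegrable g volume 0 (2 * π)) (ξ : ℝ) :
    cosCoeff (fun x => f x - g x) ξ = cosCoeff f ξ - cosCoeff g ξ := by
  simp only [cosCoeff, sub_mul]
  exact intervalIntegral.integral_sub (hf.mul_continuousOn (by fun_prop))
    (hg.mul_continuousOn (by fun_prop))

theorem sinCoeff_sub {f g : ℝ → ℝ} (hf : IntervalIntegrable f volume 0 (2 * π))
    (hg : IntervalIntegrable g volume 0 (2 * π)) (ξ : ℝ) :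
    sinCoeff (fun x => f x - g x) ξ = sinCoeff f ξ - sinCoeff g ξ := by
  simp only [sinCoeff, sub_mul]
  exact intervalIntegral.integral_sub (hf.mul_continuousOn (by fun_prop))
    (hg.mul_continuousOn (by fun_prop))

theorem fourier_neg_two_pi_smul_ofReal (k : ℤ) (x r : ℝ) :
    fourier (-k) (x : AddCircle (2 * π - 0)) • (r : ℂ)
      = ((r * cos (k * x) : ℝ) : ℂ) - ((r * sin (k * x) : ℝ) : ℂ) * Complex.I := by
  have exponent : (2 * π * Complex.I * ((-k : ℤ) : ℂ) * x / ((2 * π - 0 : ℝ) : ℂ) : ℂ)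
      = ((-(k * x) : ℝ) : ℂ) * Complex.I := by
    have : (π : ℂ) ≠ 0 := mod_cast pi_ne_zero
    push_cast
    field_simp
    ring
  rw [fourier_coe_apply, exponent, Complex.exp_mul_I, ← Complex.ofReal_cos, ← Complex.ofReal_sin,
    cos_neg, sin_neg, smul_eq_mul]
  push_cast
  ring

theorem fourierCoeffOn_ofReal {f : ℝ → ℝ} (hf : IntervalIntegrable f volume 0 (2 * π)) (k : ℤ) :
    fourierCoeffOn two_pi_pos (fun x => (f x : ℂ)) k
      = (1 / (2 * π)) • ((cosCoeff f k : ℂ) - (sinCoeff f k : ℂ) * Complex.I) := by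
  have hcos : IntervalIntegrable (fun x => ((f x * cos (k * x) : ℝ) : ℂ)) volume 0 (2 * π) :=
    intervalIntegrable_ofReal (hf.mul_continuousOn (by fun_prop))
  have hsin : IntervalIntegrable (fun x => ((f x * sin (k * x) : ℝ) : ℂ)) volume 0 (2 * π) :=
    intervalIntegrable_ofReal (hf.mul_continuousOn (by fun_prop))
  simp_rw [fourierCoeffOn_eq_integral, fourier_neg_two_pi_smul_ofReal]
  rw [intervalIntegral.integral_sub hcos (hsin.mul_const _),
    intervalIntegral.integral_mul_const, intervalIntegral.integral_ofReal,
    intervalIntegral.integral_ofReal, sub_zero, cosCoeff, sinCoeff]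

theorem norm_fourierCoeffOn_ofReal_sq {f : ℝ → ℝ} (hf : IntervalIntegrable f volume 0 (2 * π))
    (k : ℤ) :
    ‖fourierCoeffOn two_pi_pos (fun x => (f x : ℂ)) k‖ ^ 2
      = (cosCoeff f k ^ 2 + sinCoeff f k ^ 2) / (4 * π ^ 2) := by
  rw [fourierCoeffOn_ofReal hf, sub_eq_add_neg, ← neg_mul, ← Complex.ofReal_neg, norm_smul, mul_pow,
    ← Complex.normSq_eq_norm_sq, Complex.normSq_add_mul_I, norm_eq_abs, sq_abs]
  ring

theorem hasSum_cosCoeff_sq_add_sinCoeff_sq {f : ℝ → ℝ}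
    (hf : MemLp f 2 (volume.restrict (Set.Ioc 0 (2 * π)))) :
    HasSum (fun n : ℕ => cosCoeff f (n + 1) ^ 2 + sinCoeff f (n + 1) ^ 2)
      (π * (∫ x in (0 : ℝ)..(2 * π), f x ^ 2) - cosCoeff f 0 ^ 2 / 2) := by
  have hf₁ := intervalIntegrable_of_memLp one_le_two two_pi_pos.le hf
  have hfC : MemLp (fun x => (f x : ℂ)) 2 (volume.restrict (Set.Ioc 0 (2 * π))) := hf.ofReal
  have parseval_int := hasSum_sq_fourierCoeffOn two_pi_pos hfC
  have parseval_nat := ((hasSum_nat_add_iff' 1).2 parseval_int.nat_add_neg).mul_left (2 * π ^ 2)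
  simp only [norm_fourierCoeffOn_ofReal_sq hf₁] at parseval_nat
  refine (congrArg₂ (HasSum · ·) (funext fun n => ?_) ?_).mp parseval_nat
  · push_cast
    rw [cosCoeff_neg, sinCoeff_neg]
    field_simp
    ring
  · have sinCoeff_zero : sinCoeff f 0 = 0 := by simp [sinCoeff]
    simp only [Finset.sum_range_one, Nat.cast_zero, neg_zero, Int.cast_zero, sinCoeff_zero,
      Complex.norm_real, norm_eq_abs, sq_abs, sub_zero, smul_eq_mul]
    field_simp
    ring

end Parseval

section IntegralOperators

variable {K : ℝ → ℝ → ℝ} {f g : ℝ → ℝ} {a b c d : ℝ}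

theorem integral_kernel_mul_swap (hK : Continuous (Function.uncurry K))
    (hf : IntervalIntegrable f volume c d) (hg : IntervalIntegrable g volume a b) :
    ∫ x in a..b, (∫ y in c..d, K x y * f y) * g x
      = ∫ y in c..d, f y * ∫ x in a..b, K x y * g x := by
  have integrable_fg : IntegrableOn (fun z : ℝ × ℝ => g z.1 * f z.2)
      (Set.uIcc a b ×ˢ Set.uIcc c d) := by
    rw [IntegrableOn, Measure.volume_eq_prod, ← Measure.prod_restrict]
    exact ((intervalIntegrable_iff' (by simp)).1 hg).mul_prod
      ((intervalIntegrable_iff' (by simp)).1 hf)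
  have integrable_Kfg : IntegrableOn (Function.uncurry fun x y => K x y * (g x * f y))
      (Set.uIoc a b ×ˢ Set.uIoc c d) :=
    (integrable_fg.continuousOn_mul hK.continuousOn (isCompact_uIcc.prod isCompact_uIcc)).mono_set
      (Set.prod_mono Set.uIoc_subset_uIcc Set.uIoc_subset_uIcc)
  calc ∫ x in a..b, (∫ y in c..d, K x y * f y) * g x
      = ∫ x in a..b, ∫ y in c..d, K x y * (g x * f y) := by
        simp_rw [← intervalIntegral.integral_mul_const, mul_assoc, mul_comm (g _)]
    _ = ∫ y in c..d, ∫ x in a..b, K x y * (g x * f y) :=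
        intervalIntegral_intervalIntegral_swap integrable_Kfg
    _ = ∫ y in c..d, f y * ∫ x in a..b, K x y * g x := by
        simp_rw [← mul_assoc, intervalIntegral.integral_mul_const, mul_comm]

theorem continuous_integral_kernel_mul (hK : Continuous (Function.uncurry K))
    (hf : IntervalIntegrable f volume c d) : Continuous fun x => ∫ y in c..d, K x y * f y := by
  refine continuous_iff_continuousAt.2 fun x₀ => ?_
  obtain ⟨C, hC⟩ := ((isCompact_closedBall x₀ 1).prod
    (isCompact_uIcc (a := c) (b := d))).exists_bound_of_continuousOn hK.continuousOn
  refine intervalIntegral.continuousAt_of_dominated_interval (bound := fun y => C * ‖f y‖)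
    (.of_forall fun x => ?_) ?_ (hf.norm.const_mul C) (.of_forall fun y _ => ?_)
  · exact (hK.comp (Continuous.prodMk_right x)).aestronglyMeasurable.mul
      hf.def'.aestronglyMeasurable
  · filter_upwards [Metric.closedBall_mem_nhds x₀ one_pos] with x hx
    refine .of_forall fun y hy => ?_
    rw [norm_mul]
    gcongr
    exact hC (x, y) ⟨hx, Set.uIoc_subset_uIcc hy⟩
  · exact ((hK.comp (Continuous.prodMk_left y)).mul continuous_const).continuousAt

end IntegralOperators

section HeatKernel

variable {f g : ℝ → ℝ} {t : ℝ}

theorem summable_exp_neg_succ_sq_mul (ht : 0 < t) :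
    Summable fun n : ℕ => exp (-((n : ℝ) + 1) ^ 2 * t) := by
  have le_succ_sq (n : ℕ) : (n : ℝ) ≤ ((n : ℝ) + 1) ^ 2 := by nlinarith [n.cast_nonneg (α := ℝ)]
  simpa only [neg_mul, mul_comm t] using
    summable_exp_nat_mul_of_ge (neg_lt_zero.2 ht) le_succ_sq

theorem norm_exp_mul_cos_le (u v : ℝ) : ‖exp u * cos v‖ ≤ exp u := by
  rw [norm_mul, norm_of_nonneg (exp_nonneg u)]
  exact mul_le_of_le_one_right (exp_nonneg u) (abs_cos_le_one v)

theorem continuous_Φ (ht : 0 < t) : Continuous (Φ t) :=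
  continuous_const.add <| continuous_const.mul <|
    continuous_tsum (fun n => by fun_prop) (summable_exp_neg_succ_sq_mul ht)
      fun _ _ => norm_exp_mul_cos_le _ _

theorem continuous_uncurry_Φ_sub (ht : 0 < t) :
    Continuous (Function.uncurry fun x y => Φ t (x - y)) :=
  (continuous_Φ ht).comp (continuous_fst.sub continuous_snd)

theorem Φ_neg (t x : ℝ) : Φ t (-x) = Φ t x := by
  simp only [Φ, mul_neg, cos_neg]

theorem continuous_Ψ (ht : 0 < t) (hf : IntervalIntegrable f volume 0 (2 * π)) :
    Continuous (Ψ f t) :=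
  continuous_integral_kernel_mul (continuous_uncurry_Φ_sub ht) hf

theorem integral_Ψ_mul (ht : 0 < t) (hf : IntervalIntegrable f volume 0 (2 * π))
    (hg : IntervalIntegrable g volume 0 (2 * π)) :
    ∫ x in (0 : ℝ)..(2 * π), Ψ f t x * g x = ∫ x in (0 : ℝ)..(2 * π), f x * Ψ g t x := by
  have Φ_symm (x y : ℝ) : Φ t (x - y) = Φ t (y - x) := by rw [← Φ_neg, neg_sub]
  calc ∫ x in (0 : ℝ)..(2 * π), Ψ f t x * g x
      = ∫ y in (0 : ℝ)..(2 * π), f y * ∫ x in (0 : ℝ)..(2 * π), Φ t (x - y) * g x :=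
        integral_kernel_mul_swap (continuous_uncurry_Φ_sub ht) hf hg
    _ = ∫ y in (0 : ℝ)..(2 * π), f y * Ψ g t y := by simp only [Φ_symm _, Ψ]

theorem Ψ_eq_tsum (ht : 0 < t) (hf : IntervalIntegrable f volume 0 (2 * π)) (x : ℝ) :
    Ψ f t x = 1 / (2 * π) * (∫ y in (0 : ℝ)..(2 * π), f y)
      + 1 / π * ∑' n : ℕ, exp (-((n : ℝ) + 1) ^ 2 * t)
          * ∫ y in (0 : ℝ)..(2 * π), cos (((n : ℝ) + 1) * (x - y)) * f y := by
  let E (n : ℕ) : ℝ := exp (-((n : ℝ) + 1) ^ 2 * t)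
  let F (n : ℕ) (y : ℝ) : ℝ := E n * cos (((n : ℝ) + 1) * (x - y))
  have hE : Summable E := summable_exp_neg_succ_sq_mul ht
  have hF_le (n : ℕ) (y : ℝ) : ‖F n y‖ ≤ E n := norm_exp_mul_cos_le _ _
  have hF_cont (n : ℕ) : Continuous (F n) := by fun_prop
  have hF_tsum : Continuous fun y => ∑' n, F n y := continuous_tsum hF_cont hE hF_le
  have integral_tsum : HasSum (fun n => ∫ y in (0 : ℝ)..(2 * π), F n y * f y)
      (∫ y in (0 : ℝ)..(2 * π), (∑' n, F n y) * f y) := by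
    refine intervalIntegral.hasSum_integral_of_dominated_convergence (fun n y => E n * ‖f y‖)
      (fun n => (hF_cont n).aestronglyMeasurable.mul hf.def'.aestronglyMeasurable)
      (fun n => .of_forall fun y _ => ?_) (.of_forall fun y _ => hE.mul_right _) ?_
      (.of_forall fun y _ => (Summable.of_norm_bounded hE (hF_le · y)).hasSum.mul_right _)
    · rw [norm_mul]
      gcongr
      exact hF_le n y
    · simpa only [tsum_mul_right] using hf.norm.const_mul (∑' n, E n)
  calc Ψ f t x
      = ∫ y in (0 : ℝ)..(2 * π), (1 / (2 * π) * f y + 1 / π * ((∑' n, F n y) * f y)) := by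
        simp only [Ψ, Φ, F, E, add_mul, mul_assoc]
    _ = 1 / (2 * π) * (∫ y in (0 : ℝ)..(2 * π), f y)
          + 1 / π * ∑' n, ∫ y in (0 : ℝ)..(2 * π), F n y * f y := by
        rw [intervalIntegral.integral_add (hf.const_mul _)
            ((hf.continuousOn_mul hF_tsum.continuousOn).const_mul _),
          intervalIntegral.integral_const_mul, intervalIntegral.integral_const_mul,
          integral_tsum.tsum_eq]
    _ = _ := by simp only [F, E, mul_assoc, intervalIntegral.integral_const_mul]

theorem Ψ_cos (ht : 0 < t) (m : ℕ) (θ x : ℝ) :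
    Ψ (fun y => cos (m * y + θ)) t x = exp (-(m : ℝ) ^ 2 * t) * cos (m * x + θ) := by
  have integral_succ (n : ℕ) :
      ∫ y in (0 : ℝ)..(2 * π), cos (((n : ℝ) + 1) * (x - y)) * cos (m * y + θ)
        = if n + 1 = m then π * cos (((n : ℝ) + 1) * x + θ) else 0 :=
    mod_cast integral_cos_mul_sub_mul_cos n.succ_ne_zero m θ x
  have integral_self := integral_cos_int_mul_add m θ
  rw [Int.cast_natCast] at integral_self
  rw [Ψ_eq_tsum ht (Continuous.intervalIntegrable (by fun_prop) _ _), integral_self]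
  simp_rw [integral_succ]
  cases m with
  | zero =>
    have normalize : 1 / (2 * π) * (2 * π * cos θ) = cos θ := by field_simp
    simpa using normalize
  | succ m =>
    rw [if_neg (by positivity)]
    simp only [Nat.add_right_cancel_iff, mul_ite, mul_zero, tsum_ite_eq, zero_add]
    push_cast
    field_simp

theorem integral_Ψ_mul_cos (ht : 0 < t) (hf : IntervalIntegrable f volume 0 (2 * π)) (m : ℕ)
    (θ : ℝ) :
    ∫ x in (0 : ℝ)..(2 * π), Ψ f t x * cos (m * x + θ)
      = exp (-(m : ℝ) ^ 2 * t) * ∫ x in (0 : ℝ)..(2 * π), f x * cos (m * x + θ) := by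
  rw [integral_Ψ_mul ht hf (Continuous.intervalIntegrable (by fun_prop) _ _),
    ← intervalIntegral.integral_const_mul]
  simp_rw [Ψ_cos ht, mul_left_comm]

theorem cosCoeff_Ψ (ht : 0 < t) (hf : IntervalIntegrable f volume 0 (2 * π)) (m : ℕ) :
    cosCoeff (Ψ f t) m = exp (-(m : ℝ) ^ 2 * t) * cosCoeff f m := by
  simpa only [cosCoeff, add_zero] using integral_Ψ_mul_cos ht hf m 0

theorem sinCoeff_Ψ (ht : 0 < t) (hf : IntervalIntegrable f volume 0 (2 * π)) (m : ℕ) :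
    sinCoeff (Ψ f t) m = exp (-(m : ℝ) ^ 2 * t) * sinCoeff f m := by
  simpa only [sinCoeff, ← sub_eq_add_neg, cos_sub_pi_div_two] using
    integral_Ψ_mul_cos ht hf m (-(π / 2))

theorem cosCoeff_Ψ_sub (ht : 0 < t) (hf : IntervalIntegrable f volume 0 (2 * π)) (m : ℕ) :
    cosCoeff (fun x => Ψ f t x - f x) m = (exp (-(m : ℝ) ^ 2 * t) - 1) * cosCoeff f m := by
  rw [cosCoeff_sub ((continuous_Ψ ht hf).intervalIntegrable _ _) hf, cosCoeff_Ψ ht hf, sub_one_mul]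

theorem sinCoeff_Ψ_sub (ht : 0 < t) (hf : IntervalIntegrable f volume 0 (2 * π)) (m : ℕ) :
    sinCoeff (fun x => Ψ f t x - f x) m = (exp (-(m : ℝ) ^ 2 * t) - 1) * sinCoeff f m := by
  rw [sinCoeff_sub ((continuous_Ψ ht hf).intervalIntegrable _ _) hf, sinCoeff_Ψ ht hf, sub_one_mul]

theorem integral_sq_Ψ_sub (ht : 0 < t) (hf : MemLp f 2 (volume.restrict (Set.Ioc 0 (2 * π)))) :
    ∫ x in (0 : ℝ)..(2 * π), (Ψ f t x - f x) ^ 2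
      = 1 / π * ∑' n : ℕ, (1 - exp (-((n : ℝ) + 1) ^ 2 * t)) ^ 2
          * (cosCoeff f (n + 1) ^ 2 + sinCoeff f (n + 1) ^ 2) := by
  have hf₁ := intervalIntegrable_of_memLp one_le_two two_pi_pos.le hf
  have error_memLp : MemLp (fun x => Ψ f t x - f x) 2 (volume.restrict (Set.Ioc 0 (2 * π))) :=
    (memLp_restrict_Ioc_of_continuous (continuous_Ψ ht hf₁) 2).sub hf
  have zero_coeff : cosCoeff (fun x => Ψ f t x - f x) 0 = 0 := by
    simpa using cosCoeff_Ψ_sub ht hf₁ 0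
  have coeff_sq (n : ℕ) : cosCoeff (fun x => Ψ f t x - f x) (n + 1) ^ 2
      + sinCoeff (fun x => Ψ f t x - f x) (n + 1) ^ 2
      = (1 - exp (-((n : ℝ) + 1) ^ 2 * t)) ^ 2
          * (cosCoeff f (n + 1) ^ 2 + sinCoeff f (n + 1) ^ 2) := by
    have hcos := cosCoeff_Ψ_sub ht hf₁ (n + 1)
    have hsin := sinCoeff_Ψ_sub ht hf₁ (n + 1)
    push_cast at hcos hsin
    rw [hcos, hsin]
    ring
  simp_rw [← coeff_sq]
  rw [(hasSum_cosCoeff_sq_add_sinCoeff_sq error_memLp).tsum_eq, zero_coeff]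
  field_simp
  ring

end HeatKernel

theorem tendsto_tsum_one_sub_exp_sq_mul {ι : Type*} {r c : ι → ℝ} (hr : ∀ i, 0 ≤ r i)
    (hc : Summable c) :
    Tendsto (fun t => ∑' i, (1 - exp (-r i * t)) ^ 2 * c i) (nhdsWithin 0 (Set.Ioi 0))
      (nhds 0) := by
  have termwise (i : ι) : Tendsto (fun t => (1 - exp (-r i * t)) ^ 2 * c i)
      (nhdsWithin 0 (Set.Ioi 0)) (nhds 0) := by
    have h : Continuous fun t => (1 - exp (-r i * t)) ^ 2 * c i := by fun_prop
    simpa using (h.tendsto 0).mono_left nhdsWithin_le_nhds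
  have dominated : ∀ᶠ t in nhdsWithin 0 (Set.Ioi 0), ∀ i,
      ‖(1 - exp (-r i * t)) ^ 2 * c i‖ ≤ ‖c i‖ := by
    filter_upwards [self_mem_nhdsWithin] with t ht i
    have exp_le_one : exp (-r i * t) ≤ 1 :=
      exp_le_one_iff.2 (mul_nonpos_of_nonpos_of_nonneg (neg_nonpos.2 (hr i)) (le_of_lt ht))
    rw [norm_mul, norm_of_nonneg (sq_nonneg _)]
    exact mul_le_of_le_one_left (norm_nonneg _)
      (pow_le_one₀ (sub_nonneg.2 exp_le_one) (sub_le_self _ (exp_nonneg _)))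
  simpa only [tsum_zero] using tendsto_tsum_of_dominated_convergence hc.norm termwise dominated

theorem statement_13_general {ψ : ℝ → ℝ} (hψ : MemLp ψ 2 (volume.restrict (Set.Ioc 0 (2 * π))))
    {a b : ℕ → ℝ} (ha : ∀ n : ℕ, a n = ∫ x in (0 : ℝ)..(2 * π), ψ x * cos (((n : ℝ) + 1) * x))
    (hb : ∀ n : ℕ, b n = ∫ x in (0 : ℝ)..(2 * π), ψ x * sin (((n : ℝ) + 1) * x)) :
    (∀ t : ℝ, 0 < t →
      (∫ x in (0 : ℝ)..(2 * π), |Ψ ψ t x - ψ x| ^ 2)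
        = (1 / π) * ∑' n : ℕ, (1 - exp (-((n : ℝ) + 1) ^ 2 * t)) ^ 2 * (a n ^ 2 + b n ^ 2)) ∧
    Tendsto (fun t : ℝ => ∫ x in (0 : ℝ)..(2 * π), |Ψ ψ t x - ψ x| ^ 2)
      (nhdsWithin 0 (Set.Ioi 0)) (nhds 0) := by
  obtain rfl : a = fun n : ℕ => cosCoeff ψ (n + 1) := funext ha
  obtain rfl : b = fun n : ℕ => sinCoeff ψ (n + 1) := funext hb
  simp only [sq_abs]
  have formula (t : ℝ) (ht : 0 < t) := integral_sq_Ψ_sub ht hψ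
  refine ⟨formula, ?_⟩
  have series_tendsto := (tendsto_tsum_one_sub_exp_sq_mul
    (fun n : ℕ => sq_nonneg ((n : ℝ) + 1))
    (hasSum_cosCoeff_sq_add_sinCoeff_sq hψ).summable).const_mul (1 / π)
  rw [mul_zero] at series_tendsto
  refine series_tendsto.congr' ?_
  filter_upwards [self_mem_nhdsWithin] with t ht using (formula t ht).symm

/-- If `ψ : ℝ → ℝ` is `C²` and `2π`-periodic, with Fourier coefficients
`aₙ = ∫₀^{2π} ψ(x)·cos(nx) dx` and `bₙ = ∫₀^{2π} ψ(x)·sin(nx) dx` (here `a k` is the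
coefficient of frequency `k+1`), then for every `t > 0`,
`∫₀^{2π} |Ψ(t,x) − ψ(x)|² dx = (1/π)·∑_{n=1}^∞ (1 − exp(−n²t))²·(aₙ² + bₙ²)`, and this
quantity tends to `0` as `t → 0⁺`. -/
theorem statement_13 (ψ : ℝ → ℝ) (hψ : ContDiff ℝ 2 ψ) (hper : ∀ x : ℝ, ψ (x + 2 * π) = ψ x)
    (a b : ℕ → ℝ)
    (ha : ∀ n : ℕ, a n = ∫ x in (0 : ℝ)..(2 * π), ψ x * Real.cos (((n : ℝ) + 1) * x))
    (hb : ∀ n : ℕ, b n = ∫ x in (0 : ℝ)..(2 * π), ψ x * Real.sin (((n : ℝ) + 1) * x)) :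
    (∀ t : ℝ, 0 < t →
      (∫ x in (0 : ℝ)..(2 * π), |Ψ ψ t x - ψ x| ^ 2)
        = (1 / π) * ∑' n : ℕ,
            (1 - Real.exp (-((n : ℝ) + 1) ^ 2 * t)) ^ 2 * ((a n) ^ 2 + (b n) ^ 2)) ∧
    Tendsto (fun t : ℝ => ∫ x in (0 : ℝ)..(2 * π), |Ψ ψ t x - ψ x| ^ 2)
      (nhdsWithin 0 (Set.Ioi 0)) (nhds 0) := by
  exact statement_13_general (memLp_restrict_Ioc_of_continuous hψ.continuous 2) ha hb
end
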